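/- Let D be an L^1-closed convex subset of 𝒫 and define u(X) = inf_{Q∈D} E_Q[X] for X ∈ L^0. Then D is the determining set of u, i.e., D = {Q ∈ 𝒫 : E_Q[X] ≥ u(X) for every X ∈ L^0}; moreover, D also equals the determining set of the restriction of u to L^∞, i.e., D = {Q ∈ 𝒫 : E_Q[X] ≥ u(X) for every X ∈ L^∞}. -/

import Mathlib

open MeasureTheory Filter Set
open scoped ENNReal

variable {Ω : Type*} [MeasurableSpace Ω]

/-- Densities of probability measures absolutely continuous w.r.t. `P`. -/
def Dens (P : Measure Ω) : Set (Ω → ℝ) :=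
  {Z | Measurable Z ∧ (∀ ω, 0 ≤ Z ω) ∧ ∫⁻ ω, ENNReal.ofReal (Z ω) ∂P = 1}

/-- `E_Q[X] = E_Q[X⁺] − E_Q[X⁻]` with the convention `∞ − ∞ = −∞`, where `dQ/dP = Z`. -/
noncomputable def eexp (P : Measure Ω) (Z X : Ω → ℝ) : EReal :=
  if (∫⁻ ω, ENNReal.ofReal (-(Z ω * X ω)) ∂P) = ⊤ then ⊥
  else ((∫⁻ ω, ENNReal.ofReal (Z ω * X ω) ∂P : ℝ≥0∞) : EReal)
    - ((∫⁻ ω, ENNReal.ofReal (-(Z ω * X ω)) ∂P : ℝ≥0∞) : EReal)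

/-- Coherent utility function determined by a set of densities `D`. -/
noncomputable def cohU (P : Measure Ω) (D : Set (Ω → ℝ)) (X : Ω → ℝ) : EReal :=
  ⨅ Z ∈ D, eexp P Z X

/-- The weak `L¹`-space associated with `D`. -/
def Lw (P : Measure Ω) (D : Set (Ω → ℝ)) : Set (Ω → ℝ) :=
  {X | Measurable X ∧ ⊥ < cohU P D X ∧ ⊥ < cohU P D (fun ω => -X ω)}

noncomputable def tailSup (P : Measure Ω) (D : Set (Ω → ℝ)) (X : Ω → ℝ) (n : ℕ) : ℝ≥0∞ :=
  ⨆ Z ∈ D, ∫⁻ ω in {ω | (n : ℝ) < |X ω|}, ENNReal.ofReal (Z ω * |X ω|) ∂P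

/-- The strong `L¹`-space associated with `D`. -/
def Ls (P : Measure Ω) (D : Set (Ω → ℝ)) : Set (Ω → ℝ) :=
  {X | Measurable X ∧ Tendsto (tailSup P D X) atTop (nhds 0)}

/-- Risk-neutral densities for the set `A` of attainable P&Ls. -/
def RiskNeutral (P : Measure Ω) (A : Set (Ω → ℝ)) : Set (Ω → ℝ) :=
  {Z | Z ∈ Dens P ∧ ∀ X ∈ A, eexp P Z X ≤ 0}

/-- `A` is `D`-consistent. -/
def DConsistent (P : Measure Ω) (D A : Set (Ω → ℝ)) : Prop :=
  ∃ A' ⊆ A ∩ Ls P D, D ∩ RiskNeutral P A = D ∩ RiskNeutral P A'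

/-- Sequential compactness of `D` in the weak topology `σ(L¹, L^∞)`. -/
def WSeqCompact (P : Measure Ω) (D : Set (Ω → ℝ)) : Prop :=
  ∀ Z : ℕ → Ω → ℝ, (∀ n, Z n ∈ D) → ∃ W ∈ D, ∃ φ : ℕ → ℕ, StrictMono φ ∧
    ∀ g : Ω → ℝ, Measurable g → (∃ C : ℝ, ∀ ω, |g ω| ≤ C) →
      Tendsto (fun k => ∫ ω, Z (φ k) ω * g ω ∂P) atTop (nhds (∫ ω, W ω * g ω ∂P))

/-- `D` is closed under `L¹`-convergence (within densities). -/
def L1Closed (P : Measure Ω) (D : Set (Ω → ℝ)) : Prop :=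
  ∀ Z : ℕ → Ω → ℝ, (∀ n, Z n ∈ D) → ∀ W ∈ Dens P,
    Tendsto (fun n => ∫ ω, |Z n ω - W ω| ∂P) atTop (nhds 0) → W ∈ D


/-- Every continuous linear functional on `L¹` of a finite measure is integration against a
bounded measurable function. -/
theorem exists_bounded_measurable_forall_eq_integral (P : Measure Ω) [IsFiniteMeasure P]
    (f : StrongDual ℝ (Lp ℝ 1 P)) :
    ∃ g : Ω → ℝ, Measurable g ∧ (∀ ω, |g ω| ≤ ‖f‖) ∧
      ∀ h : Lp ℝ 1 P, f h = ∫ ω, h ω * g ω ∂P := by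
  have hmem (h : Lp ℝ 2 P) : MemLp h 1 P := (Lp.memLp h).mono_exponent (by norm_num)
  let T : Lp ℝ 2 P →ₗ[ℝ] ℝ :=
    { toFun := fun h => f ((hmem h).toLp h)
      map_add' := fun a b => by
        rw [← map_add, ← MemLp.toLp_add]
        congr 1
        exact (MemLp.toLp_eq_toLp_iff _ _).2 (Lp.coeFn_add a b)
      map_smul' := fun c a => by
        rw [RingHom.id_apply, ← map_smul, ← MemLp.toLp_const_smul]
        congr 1
        exact (MemLp.toLp_eq_toLp_iff _ _).2 (Lp.coeFn_smul c a) }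
  have hT : ∃ K, ∀ h, ‖T h‖ ≤ K * ‖h‖ := by
    refine ⟨‖f‖ * (P univ ^ (1 / (1 : ℝ≥0∞).toReal - 1 / (2 : ℝ≥0∞).toReal)).toReal,
      fun h => (f.le_opNorm _).trans ?_⟩
    rw [mul_assoc]
    refine mul_le_mul_of_nonneg_left ?_ (norm_nonneg f)
    rw [Lp.norm_toLp, Lp.norm_def, mul_comm, ← ENNReal.toReal_mul]
    refine ENNReal.toReal_mono (ENNReal.mul_ne_top (Lp.memLp h).eLpNorm_ne_top ?_)
      (eLpNorm_le_eLpNorm_mul_rpow_measure_univ (by norm_num) (Lp.memLp h).aestronglyMeasurable)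
    exact ENNReal.rpow_ne_top_of_nonneg (by norm_num) (measure_ne_top P univ)
  obtain ⟨K, hK⟩ := hT
  let k : Lp ℝ 2 P := (InnerProductSpace.toDual ℝ (Lp ℝ 2 P)).symm (T.mkContinuous K hK)
  have hk (s : Set Ω) (hs : MeasurableSet s) :
      ∫ ω in s, k ω ∂P = f (indicatorConstLp 1 hs (measure_ne_top P s) 1) := by
    rw [← L2.inner_indicatorConstLp_one hs (measure_ne_top P s) k, real_inner_comm,
      InnerProductSpace.toDual_symm_apply]
    change f _ = f _
    congr 1
    exact (MemLp.toLp_eq_toLp_iff _ _).2 indicatorConstLp_coeFn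
  have hkint : Integrable k P := memLp_one_iff_integrable.1 (hmem k)
  have hkbound (s : Set Ω) (hs : MeasurableSet s) : |∫ ω in s, k ω ∂P| ≤ ‖f‖ * P.real s := by
    rw [hk s hs, ← Real.norm_eq_abs]
    refine (f.le_opNorm _).trans_eq ?_
    rw [norm_indicatorConstLp one_ne_zero ENNReal.one_ne_top]
    simp
  have hle : ∀ᵐ ω ∂P, k ω ≤ ‖f‖ :=
    ae_le_of_forall_setIntegral_le hkint (integrable_const _) fun s hs _ => by
      rw [setIntegral_const, smul_eq_mul, mul_comm]
      exact (abs_le.1 (hkbound s hs)).2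
  have hge : ∀ᵐ ω ∂P, -‖f‖ ≤ k ω :=
    ae_le_of_forall_setIntegral_le (integrable_const _) hkint fun s hs _ => by
      rw [setIntegral_const, smul_eq_mul]
      linarith [(abs_le.1 (hkbound s hs)).1]
  let g : Ω → ℝ := fun ω => max (-‖f‖) (min ‖f‖ (k ω))
  have hgm : Measurable g :=
    measurable_const.max (measurable_const.min (Lp.stronglyMeasurable k).measurable)
  have hgb (ω : Ω) : |g ω| ≤ ‖f‖ :=
    abs_le.2 ⟨le_max_left _ _, max_le (by linarith [norm_nonneg f]) (min_le_left _ _)⟩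
  have hgk : g =ᵐ[P] k := by
    filter_upwards [hle, hge] with ω h₁ h₂
    simp [g, h₁, h₂]
  have hmul {h : Ω → ℝ} (hh : Integrable h P) : Integrable (fun ω => h ω * g ω) P :=
    hh.mul_bdd hgm.aestronglyMeasurable (ae_of_all _ hgb)
  let G : Lp ℝ 1 P →ₗ[ℝ] ℝ :=
    { toFun := fun h => ∫ ω, h ω * g ω ∂P
      map_add' := fun a b => by
        rw [← integral_add (hmul (L1.integrable_coeFn a)) (hmul (L1.integrable_coeFn b))]
        refine integral_congr_ae ?_
        filter_upwards [Lp.coeFn_add a b] with ω hω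
        rw [hω, Pi.add_apply, add_mul]
      map_smul' := fun c a => by
        rw [RingHom.id_apply, smul_eq_mul, ← integral_const_mul]
        refine integral_congr_ae ?_
        filter_upwards [Lp.coeFn_smul c a] with ω hω
        rw [hω, Pi.smul_apply, smul_eq_mul, mul_assoc] }
  have hG : ∀ h, ‖G h‖ ≤ ‖f‖ * ‖h‖ := fun h => by
    rw [L1.norm_eq_integral_norm, ← integral_const_mul]
    refine norm_integral_le_of_norm_le ((L1.integrable_coeFn h).norm.const_mul _)
      (ae_of_all _ fun ω => ?_)
    rw [norm_mul, mul_comm]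
    exact mul_le_mul_of_nonneg_right (hgb ω) (norm_nonneg _)
  refine ⟨g, hgm, hgb, fun h => ?_⟩
  change f h = G.mkContinuous ‖f‖ hG h
  induction h using Lp.induction ENNReal.one_ne_top with
  | indicatorConst c hs hμs =>
    rename_i s
    have hc : (Lp.simpleFunc.indicatorConst 1 hs hμs.ne c : Lp ℝ 1 P) =
        c • indicatorConstLp 1 hs (measure_ne_top P s) (1 : ℝ) := by
      rw [Lp.simpleFunc.coe_indicatorConst, indicatorConstLp, indicatorConstLp,
        ← MemLp.toLp_const_smul]
      congr 1
      ext ω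
      by_cases hω : ω ∈ s <;> simp [hω]
    rw [hc, map_smul, map_smul, ← hk s hs]
    congr 1
    change _ = ∫ ω, _ ∂P
    rw [← integral_indicator hs]
    refine integral_congr_ae ?_
    filter_upwards [indicatorConstLp_coeFn (p := 1) (hs := hs) (hμs := measure_ne_top P s)
      (c := (1 : ℝ)), hgk] with ω h₁ h₂
    rw [h₁, h₂]
    by_cases hω : ω ∈ s <;> simp [hω]
  | add hu hv _ h₁ h₂ => rw [map_add, map_add, h₁, h₂]
  | isClosed => exact isClosed_eq f.continuous (ContinuousLinearMap.continuous _)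

theorem Dens.integrable {P : Measure Ω} {Z : Ω → ℝ} (hZ : Z ∈ Dens P) : Integrable Z P := by
  refine ⟨hZ.1.aestronglyMeasurable, ?_⟩
  rw [hasFiniteIntegral_iff_ofReal (ae_of_all _ hZ.2.1), hZ.2.2]
  exact ENNReal.one_lt_top

theorem eexp_eq_integral {P : Measure Ω} {Z X : Ω → ℝ}
    (h : Integrable (fun ω => Z ω * X ω) P) :
    eexp P Z X = ((∫ ω, Z ω * X ω ∂P : ℝ) : EReal) := by
  have h₁ : ∫⁻ ω, ENNReal.ofReal (Z ω * X ω) ∂P ≠ ⊤ := h.lintegral_lt_top.ne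
  have h₂ : ∫⁻ ω, ENNReal.ofReal (-(Z ω * X ω)) ∂P ≠ ⊤ := h.neg.lintegral_lt_top.ne
  rw [eexp, if_neg h₂, integral_eq_lintegral_pos_part_sub_lintegral_neg_part h, EReal.coe_sub,
    EReal.coe_ennreal_toReal h₁, EReal.coe_ennreal_toReal h₂]

/-- A density whose expectations of bounded random variables dominate the utility of a
convex `L¹`-closed set of densities belongs to that set. -/
theorem mem_of_forall_bounded_cohU_le_eexp {P : Measure Ω} [IsFiniteMeasure P]
    {D : Set (Ω → ℝ)} (hDsub : D ⊆ Dens P) (hDconv : Convex ℝ D) (hDclosed : L1Closed P D)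
    {W : Ω → ℝ} (hW : W ∈ Dens P)
    (h : ∀ X : Ω → ℝ, Measurable X → (∃ C : ℝ, ∀ ω, |X ω| ≤ C) → cohU P D X ≤ eexp P W X) :
    W ∈ D := by
  by_contra hWD
  let S : Set (Lp ℝ 1 P) := {k | ∃ Z ∈ D, k =ᵐ[P] Z}
  have hS : Convex ℝ S := by
    rintro x ⟨Z, hZ, hxZ⟩ y ⟨Y, hY, hyY⟩ a b ha hb hab
    refine ⟨a • Z + b • Y, hDconv hZ hY ha hb hab, ?_⟩
    filter_upwards [Lp.coeFn_add (a • x) (b • y), Lp.coeFn_smul a x, Lp.coeFn_smul b y, hxZ, hyY]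
      with ω h₁ h₂ h₃ h₄ h₅
    simp only [h₁, h₂, h₃, h₄, h₅, Pi.add_apply, Pi.smul_apply]
  have hWS : (Dens.integrable hW).toL1 W ∉ closure S := by
    intro hcl
    obtain ⟨x, hxS, hx⟩ := mem_closure_iff_seq_limit.1 hcl
    choose Z hZD hZ using hxS
    refine hWD (hDclosed Z hZD W hW ((tendsto_iff_norm_sub_tendsto_zero.1 hx).congr fun n => ?_))
    rw [L1.norm_eq_integral_norm]
    refine integral_congr_ae ?_
    filter_upwards [Lp.coeFn_sub (x n) ((Dens.integrable hW).toL1 W), hZ n,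
      (Dens.integrable hW).coeFn_toL1] with ω h₁ h₂ h₃
    rw [h₁, Pi.sub_apply, h₂, h₃, Real.norm_eq_abs]
  obtain ⟨f, c, hfW, hfS⟩ := geometric_hahn_banach_point_closed hS.closure isClosed_closure hWS
  obtain ⟨g, hgm, hgb, hg⟩ := exists_bounded_measurable_forall_eq_integral P f
  have hf {Z : Ω → ℝ} (hZ : Z ∈ Dens P) : eexp P Z g = f ((Dens.integrable hZ).toL1 Z) := by
    rw [eexp_eq_integral
      ((Dens.integrable hZ).mul_bdd hgm.aestronglyMeasurable (ae_of_all _ hgb)), hg]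
    refine congrArg _ (integral_congr_ae ?_)
    filter_upwards [(Dens.integrable hZ).coeFn_toL1] with ω hω
    rw [hω]
  have hc : (c : EReal) ≤ cohU P D g := le_iInf₂ fun Z hZ => by
    rw [hf (hDsub hZ)]
    exact EReal.coe_le_coe_iff.2
      (hfS _ (subset_closure ⟨Z, hZ, (Dens.integrable (hDsub hZ)).coeFn_toL1⟩)).le
  have hlt : eexp P W g < c := by
    rw [hf hW]
    exact EReal.coe_lt_coe_iff.2 hfW
  exact (hc.trans (h g hgm ⟨_, hgb⟩)).not_gt hlt

/-- If `D` is an `L¹`-closed convex subset of `𝒫` and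
`u(X) = inf_{Q ∈ D} E_Q[X]` for `X ∈ L⁰`, then `D` is the determining set of `u`, i.e.
`D = {Q ∈ 𝒫 : E_Q[X] ≥ u(X) for all X ∈ L⁰}`, and `D` is also the determining set of
the restriction of `u` to `L^∞`. -/
theorem stmt_1 (P : Measure Ω) [IsProbabilityMeasure P] (D : Set (Ω → ℝ))
    (hDsub : D ⊆ Dens P) (hDne : D.Nonempty) (hDconv : Convex ℝ D)
    (hDclosed : L1Closed P D) :
    D = {Z | Z ∈ Dens P ∧ ∀ X : Ω → ℝ, Measurable X → cohU P D X ≤ eexp P Z X} ∧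
    D = {Z | Z ∈ Dens P ∧ ∀ X : Ω → ℝ, Measurable X → (∃ C : ℝ, ∀ ω, |X ω| ≤ C) →
          cohU P D X ≤ eexp P Z X} := by
  have hle (Z : Ω → ℝ) (hZ : Z ∈ D) (X : Ω → ℝ) : cohU P D X ≤ eexp P Z X := iInf₂_le Z hZ
  have hmem := fun W => mem_of_forall_bounded_cohU_le_eexp (W := W) hDsub hDconv hDclosed
  constructor
  · exact Subset.antisymm (fun Z hZ => ⟨hDsub hZ, fun X _ => hle Z hZ X⟩)
      fun Z hZ => hmem Z hZ.1 fun X hX _ => hZ.2 X hX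
  · exact Subset.antisymm (fun Z hZ => ⟨hDsub hZ, fun X _ _ => hle Z hZ X⟩)
      fun Z hZ => hmem Z hZ.1 hZ.2
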